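/- For integers m and l with 1 ≤ l ≤ m, the normalized associated Legendre function satisfies 1/√(2.22(l+1)) < max_{x∈[−1,1]} |√((m−l)!/(m+l)!) P_m^l(x)| < 2^{5/4} π^{−3/4} l^{−1/4}. -/

import Mathlib

open Real

/-- The Legendre polynomial `P_m`, via the Rodrigues formula. -/
noncomputable def legendreP (m : ℕ) (x : ℝ) : ℝ :=
  (1 / (2 ^ m * m.factorial)) * iteratedDeriv m (fun y : ℝ => (y ^ 2 - 1) ^ m) x

/-- The associated Legendre function
`P_m^l(x) = (1-x²)^{l/2} (d/dx)^l P_m(x)`. -/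
noncomputable def assocLegendreP (m l : ℕ) (x : ℝ) : ℝ :=
  (Real.sqrt (1 - x ^ 2)) ^ l * iteratedDeriv l (legendreP m) x

/-! Let `u` be the normalized `l`-th derivative of `P_m` and `Y = (1 - x²)^(l/2) u`. With
`M = m (m + 1)` and `Q = M (1 - x²) - l²`, the function `Y` solves
`((1 - x²) Y')' + (Q / (1 - x²)) Y = 0`.
Where `Q > 0`, the Liouville transformations with weights `Q` and `1 - x²` have potentials that
increase, respectively decrease, on `x ≥ 0`, so that Sonin's energy decreases for the first and
increases for the second. Comparing the energies at `0` and at a critical point `x₀` of `Y`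
therefore bounds `Y(x₀)²` from above and from below by `u(0)` and `u'(0)`, one of which vanishes,
while the square of the other is an integer multiple of a product of two central binomial ratios
and is estimated by Wallis' product.

For the upper bound, `x₀` is a maximum point of `Y²`, and integrating the Gegenbauer equation of
`u` from `x₀` to `1` shows `Q(x₀) ≥ l (1 + x₀²)`. For the lower bound, comparing `u` with an
explicit barrier near `x = 1` shows that there is a critical point so close to `1` that `1 - x₀²`
is at most a constant times `l² / (M - l (l + 1))`.
-/

/-! ### Central binomial ratios -/

/-- The central binomial ratio `(2k choose k) / 4 ^ k = 1·3⋯(2k-1) / (2·4⋯(2k))`, in terms of which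
the values of Legendre functions at the origin are expressed. -/
noncomputable def centralBinomRatio (k : ℕ) : ℝ :=
  k.centralBinom / 4 ^ k

namespace centralBinomRatio

open Filter Topology

@[simp]
lemma zero : centralBinomRatio 0 = 1 := by
  simp [centralBinomRatio]

lemma pos (k : ℕ) : 0 < centralBinomRatio k := by
  have := k.centralBinom_pos
  unfold centralBinomRatio
  positivity

lemma eq_factorial_div (k : ℕ) :
    centralBinomRatio k = (2 * k).factorial / (4 ^ k * (k.factorial : ℝ) ^ 2) := by
  rw [centralBinomRatio, Nat.centralBinom_eq_two_mul_choose, Nat.cast_choose ℝ (by lia),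
    two_mul, Nat.add_sub_cancel]
  field_simp

lemma succ_eq (k : ℕ) :
    centralBinomRatio (k + 1) = (2 * k + 1) / (2 * k + 2) * centralBinomRatio k := by
  have h : ((k : ℝ) + 1) * (k + 1).centralBinom = 2 * (2 * k + 1) * k.centralBinom := by
    exact_mod_cast k.succ_mul_centralBinom_succ
  unfold centralBinomRatio
  rw [pow_succ]
  field_simp
  linear_combination 2 * h

lemma wallis_mul_sq (k : ℕ) :
    Wallis.W k * ((2 * k + 1) * centralBinomRatio k ^ 2) = 1 := by
  have h4 : (2 : ℝ) ^ (4 * k) = (4 ^ k) ^ 2 := by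
    rw [← pow_mul, mul_comm k 2, pow_mul, pow_mul]
    norm_num
  rw [Wallis.W_eq_factorial_ratio, eq_factorial_div, h4]
  field_simp

lemma tendsto_add_mul_sq (θ : ℝ) :
    Tendsto (fun k : ℕ => (k + θ) * centralBinomRatio k ^ 2) atTop (𝓝 (1 / π)) := by
  have hratio : Tendsto (fun k : ℕ => (θ + 1 * k) / (1 + 2 * k)) atTop (𝓝 (1 / 2 : ℝ)) :=
    tendsto_add_mul_div_add_mul_atTop_nhds θ 1 1 two_ne_zero
  have hW := Wallis.tendsto_W_nhds_pi_div_two.inv₀ (by positivity)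
  convert (hratio.mul hW) using 2 with k
  · rw [← eq_inv_of_mul_eq_one_right (wallis_mul_sq k)]
    field_simp
    ring
  · field_simp

lemma monotone_add_quarter_mul_sq :
    Monotone fun k : ℕ => (k + 1 / 4) * centralBinomRatio k ^ 2 := by
  refine monotone_nat_of_le_succ fun k => ?_
  rw [succ_eq, mul_pow, ← mul_assoc]
  gcongr
  push_cast
  rw [div_pow, mul_div_assoc', le_div_iff₀ (by positivity)]
  linarith

lemma antitone_add_third_mul_sq :
    Antitone fun k : ℕ => (k + 1 / 3) * centralBinomRatio k ^ 2 := by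
  refine antitone_nat_of_succ_le fun k => ?_
  rw [succ_eq, mul_pow, ← mul_assoc]
  gcongr
  push_cast
  rw [div_pow, mul_div_assoc', div_le_iff₀ (by positivity)]
  linarith [k.cast_nonneg (α := ℝ)]

lemma pi_mul_sq_le (k : ℕ) : π * (4 * k + 1) * centralBinomRatio k ^ 2 ≤ 4 := by
  have h := monotone_add_quarter_mul_sq.ge_of_tendsto (tendsto_add_mul_sq _) k
  have := (le_div_iff₀ pi_pos).1 h
  linarith

lemma le_pi_mul_sq (k : ℕ) : 3 ≤ π * (3 * k + 1) * centralBinomRatio k ^ 2 := by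
  have h := antitone_add_third_mul_sq.le_of_tendsto (tendsto_add_mul_sq _) k
  have := (div_le_iff₀ pi_pos).1 h
  linarith

end centralBinomRatio

/-! ### Sonin energies of Sturm systems -/

/-- The Sturm–Liouville equation `(v Y')' + (Q / v) Y = 0` on `s`, as a first-order system in `Y`
and its quasi-derivative `Z = v Y'`. -/
structure IsSturmSystemOn (v Q : ℝ → ℝ) (s : Set ℝ) (Y Z : ℝ → ℝ) : Prop where
  hasDerivAt_fst : ∀ x ∈ s, HasDerivAt Y (Z x / v x) x
  hasDerivAt_snd : ∀ x ∈ s, HasDerivAt Z (-(Q x * Y x) / v x) x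

/-- The data of a Liouville transformation `w = f ^ (1/4) Y` of a Sturm system: the two derivatives
prescribed for `f` and `G` say that `w₁ = (Z + G Y) / f ^ (1/4)` satisfies `w' = (√f / v) w₁` and
`w₁' = -(√f / v) q w`. -/
structure IsLiouvilleTransformOn (v Q : ℝ → ℝ) (s : Set ℝ) (f G q : ℝ → ℝ) : Prop where
  ne_zero : ∀ x ∈ s, v x ≠ 0
  weight_pos : ∀ x ∈ s, 0 < f x
  potential_pos : ∀ x ∈ s, 0 < q x
  hasDerivAt_weight : ∀ x ∈ s, HasDerivAt f (4 * f x * G x / v x) x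
  hasDerivAt_shift : ∀ x ∈ s, HasDerivAt G ((Q x + G x ^ 2 - q x * f x) / v x) x
  differentiableAt_potential : ∀ x ∈ s, DifferentiableAt ℝ q x

/-- Sonin's energy `w ^ 2 + w₁ ^ 2 / q` of a Liouville-transformed Sturm system. -/
noncomputable def soninEnergy (f G q Y Z : ℝ → ℝ) (x : ℝ) : ℝ :=
  √(f x) * Y x ^ 2 + (Z x + G x * Y x) ^ 2 / (√(f x) * q x)

section Sonin

variable {v Q f G q Y Z : ℝ → ℝ} {s : Set ℝ}

lemma IsLiouvilleTransformOn.sqrt_mul_sq_le_soninEnergy (hL : IsLiouvilleTransformOn v Q s f G q)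
    {x : ℝ} (hx : x ∈ s) : √(f x) * Y x ^ 2 ≤ soninEnergy f G q Y Z x := by
  have := hL.potential_pos x hx
  exact le_add_of_nonneg_right (by positivity)

lemma IsSturmSystemOn.hasDerivAt_soninEnergy (hS : IsSturmSystemOn v Q s Y Z)
    (hL : IsLiouvilleTransformOn v Q s f G q) {x : ℝ} (hx : x ∈ s) :
    HasDerivAt (soninEnergy f G q Y Z)
      (-(deriv q x * ((Z x + G x * Y x) ^ 2 / (√(f x) * q x ^ 2)))) x := by
  have hf := hL.weight_pos x hx
  have hr : √(f x) ≠ 0 := (sqrt_pos.2 hf).ne'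
  have hfr : f x = √(f x) ^ 2 := (sq_sqrt hf.le).symm
  have hq := (hL.potential_pos x hx).ne'
  have hv := hL.ne_zero x hx
  have dr : HasDerivAt (fun y => √(f y)) (2 * G x * √(f x) / v x) x := by
    refine ((hL.hasDerivAt_weight x hx).sqrt hf.ne').congr_deriv ?_
    rw [hfr, sqrt_sq (sqrt_nonneg _)]
    field_simp
    ring
  have dY := hS.hasDerivAt_fst x hx
  have dq := (hL.differentiableAt_potential x hx).hasDerivAt
  have dW := (hS.hasDerivAt_snd x hx).add ((hL.hasDerivAt_shift x hx).mul dY)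
  refine ((dr.mul (dY.pow 2)).add ((dW.pow 2).div (dr.mul dq) (mul_ne_zero hr hq))).congr_deriv ?_
  simp only [Pi.add_apply, Pi.mul_apply, Pi.pow_apply]
  rw [hfr, sqrt_sq (sqrt_nonneg _)]
  field_simp
  ring

lemma IsSturmSystemOn.monotoneOn_soninEnergy (hS : IsSturmSystemOn v Q s Y Z)
    (hL : IsLiouvilleTransformOn v Q s f G q) (hs : Convex ℝ s) (hq : AntitoneOn q s) :
    MonotoneOn (soninEnergy f G q Y Z) s := by
  have hd := fun x hx => hS.hasDerivAt_soninEnergy hL (x := x) hx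
  refine monotoneOn_of_hasDerivWithinAt_nonneg hs (HasDerivAt.continuousOn hd)
    (fun x hx => (hd x (interior_subset hx)).hasDerivWithinAt) fun x hx => ?_
  have hdq : deriv q x ≤ 0 := by
    rw [← derivWithin_of_mem_nhds (mem_interior_iff_mem_nhds.1 hx)]
    exact hq.derivWithin_nonpos
  exact neg_nonneg.2 (mul_nonpos_of_nonpos_of_nonneg hdq (by positivity))

lemma IsSturmSystemOn.antitoneOn_soninEnergy (hS : IsSturmSystemOn v Q s Y Z)
    (hL : IsLiouvilleTransformOn v Q s f G q) (hs : Convex ℝ s) (hq : MonotoneOn q s) :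
    AntitoneOn (soninEnergy f G q Y Z) s := by
  have hd := fun x hx => hS.hasDerivAt_soninEnergy hL (x := x) hx
  refine antitoneOn_of_hasDerivWithinAt_nonpos hs (HasDerivAt.continuousOn hd)
    (fun x hx => (hd x (interior_subset hx)).hasDerivWithinAt) fun x hx => ?_
  have hdq : 0 ≤ deriv q x := by
    rw [← derivWithin_of_mem_nhds (mem_interior_iff_mem_nhds.1 hx)]
    exact hq.derivWithin_nonneg
  exact neg_nonpos.2 (by positivity)

end Sonin

/-- The coefficient `M (1 - x²) - μ` of the associated Legendre equation
`(1 - x²) ((1 - x²) Y')' + (M (1 - x²) - μ) Y = 0`; for the function `P_m^l` one has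
`M = m (m + 1)` and `μ = l²`. -/
def legendreCoeff (M μ x : ℝ) : ℝ :=
  M * (1 - x ^ 2) - μ

section LegendreSystem

variable {M μ x₀ : ℝ} {Y Z : ℝ → ℝ}

lemma one_sub_sq_pos_of_mem_Icc (h1 : x₀ < 1) {x : ℝ} (hx : x ∈ Set.Icc 0 x₀) : 0 < 1 - x ^ 2 := by
  nlinarith [hx.1, hx.2]

lemma hasDerivAt_one_sub_sq (x : ℝ) : HasDerivAt (fun y : ℝ => 1 - y ^ 2) (-(2 * x)) x := by
  simpa using (hasDerivAt_pow 2 x).const_sub 1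

namespace legendreCoeff

lemma hasDerivAt (M μ x : ℝ) : HasDerivAt (legendreCoeff M μ) (-(2 * M * x)) x :=
  (((hasDerivAt_one_sub_sq x).const_mul M).sub_const μ).congr_deriv (by ring)

lemma antitoneOn (hM : 0 ≤ M) : AntitoneOn (legendreCoeff M μ) (Set.Ici 0) := by
  intro x hx y _ hxy
  have : x ^ 2 ≤ y ^ 2 := pow_le_pow_left₀ hx hxy 2
  unfold legendreCoeff
  gcongr

lemma leading_nonneg (hμ : 0 ≤ μ) {x : ℝ} (hx : 0 < 1 - x ^ 2) (hQ : 0 < legendreCoeff M μ x) :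
    0 ≤ M := by
  unfold legendreCoeff at hQ
  exact (pos_of_mul_pos_left (by linarith) hx.le).le

lemma pos_of_mem_Icc (hμ : 0 ≤ μ) (h1 : x₀ < 1) (hQ : 0 < legendreCoeff M μ x₀) {x : ℝ}
    (hx : x ∈ Set.Icc 0 x₀) : 0 < legendreCoeff M μ x := by
  have h0 : 0 ≤ x₀ := hx.1.trans hx.2
  have hv := one_sub_sq_pos_of_mem_Icc h1 ⟨h0, le_rfl⟩
  exact hQ.trans_le (antitoneOn (leading_nonneg hμ hv hQ) hx.1 h0 hx.2)

end legendreCoeff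

/-- The potential of the Liouville transformation of the associated Legendre equation with weight
`M (1 - x²) - μ`. -/
noncomputable def legendrePotential (M μ x : ℝ) : ℝ :=
  1 + (1 + μ / legendreCoeff M μ x) / 4 *
    (5 * x ^ 2 * (μ / legendreCoeff M μ x ^ 2) + (2 - x ^ 2) / legendreCoeff M μ x)

lemma one_le_legendrePotential (hμ : 0 ≤ μ) (h1 : x₀ < 1) (hQ : 0 < legendreCoeff M μ x₀) {x : ℝ}
    (hx : x ∈ Set.Icc 0 x₀) : 1 ≤ legendrePotential M μ x := by
  have hQx := legendreCoeff.pos_of_mem_Icc hμ h1 hQ hx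
  have : 0 < 2 - x ^ 2 := by linarith [one_sub_sq_pos_of_mem_Icc h1 hx]
  exact le_add_of_nonneg_right (by positivity)

lemma monotoneOn_legendrePotential (hμ : 0 ≤ μ) (h1 : x₀ < 1) (hQ : 0 < legendreCoeff M μ x₀) :
    MonotoneOn (legendrePotential M μ) (Set.Icc 0 x₀) := by
  intro x hx y hy hxy
  have hQx := legendreCoeff.pos_of_mem_Icc hμ h1 hQ hx
  have hQy := legendreCoeff.pos_of_mem_Icc hμ h1 hQ hy
  have hvx := one_sub_sq_pos_of_mem_Icc h1 hx
  have hM : 0 ≤ M := legendreCoeff.leading_nonneg hμ hvx hQx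
  have hQxy : legendreCoeff M μ y ≤ legendreCoeff M μ x :=
    legendreCoeff.antitoneOn hM hx.1 hy.1 hxy
  have hx0 := hx.1
  have hsq : x ^ 2 ≤ y ^ 2 := by gcongr
  have hratio : (2 - x ^ 2) / legendreCoeff M μ x ≤ (2 - y ^ 2) / legendreCoeff M μ y := by
    rw [div_le_div_iff₀ hQx hQy]
    unfold legendreCoeff
    nlinarith [mul_nonneg (add_nonneg hM hμ) (sub_nonneg.2 hsq)]
  have : 0 < 2 - x ^ 2 := by linarith
  unfold legendrePotential
  gcongr

lemma isLiouvilleTransformOn_legendreCoeff (hμ : 0 ≤ μ) (h1 : x₀ < 1)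
    (hQ : 0 < legendreCoeff M μ x₀) :
    IsLiouvilleTransformOn (fun x => 1 - x ^ 2) (legendreCoeff M μ) (Set.Icc 0 x₀)
      (legendreCoeff M μ) (fun x => -(M * (x * (1 - x ^ 2))) / (2 * legendreCoeff M μ x))
      (legendrePotential M μ) where
  ne_zero x hx := (one_sub_sq_pos_of_mem_Icc h1 hx).ne'
  weight_pos x hx := legendreCoeff.pos_of_mem_Icc hμ h1 hQ hx
  potential_pos x hx := zero_lt_one.trans_le (one_le_legendrePotential hμ h1 hQ hx)
  hasDerivAt_weight x hx := by
    have hQx := (legendreCoeff.pos_of_mem_Icc hμ h1 hQ hx).ne'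
    have hvx := (one_sub_sq_pos_of_mem_Icc h1 hx).ne'
    refine (legendreCoeff.hasDerivAt M μ x).congr_deriv ?_
    field_simp
    ring
  hasDerivAt_shift x hx := by
    have hQx := (legendreCoeff.pos_of_mem_Icc hμ h1 hQ hx).ne'
    have hvx := (one_sub_sq_pos_of_mem_Icc h1 hx).ne'
    refine ((((hasDerivAt_id x).mul (hasDerivAt_one_sub_sq x)).const_mul M).neg.div
      ((legendreCoeff.hasDerivAt M μ x).const_mul 2) (by positivity)).congr_deriv ?_
    simp only [Pi.neg_apply, Pi.mul_apply, id_eq, legendrePotential]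
    field_simp
    unfold legendreCoeff
    ring
  differentiableAt_potential x hx := by
    have hQx := (legendreCoeff.pos_of_mem_Icc hμ h1 hQ hx).ne'
    have := (legendreCoeff.hasDerivAt M μ x).differentiableAt
    unfold legendrePotential
    fun_prop (disch := positivity)

lemma isLiouvilleTransformOn_one_sub_sq (hμ : 1 / 4 ≤ μ) (h1 : x₀ < 1)
    (hQ : 0 < legendreCoeff M μ x₀) :
    IsLiouvilleTransformOn (fun x => 1 - x ^ 2) (legendreCoeff M μ) (Set.Icc 0 x₀)
      (fun x => 1 - x ^ 2) (fun x => -x / 2) (fun x => M + 1 / 4 - (μ - 1 / 4) / (1 - x ^ 2)) where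
  ne_zero x hx := (one_sub_sq_pos_of_mem_Icc h1 hx).ne'
  weight_pos x hx := one_sub_sq_pos_of_mem_Icc h1 hx
  potential_pos x hx := by
    have hQx := legendreCoeff.pos_of_mem_Icc (by linarith) h1 hQ hx
    have hvx := one_sub_sq_pos_of_mem_Icc h1 hx
    rw [sub_pos, div_lt_iff₀ hvx]
    unfold legendreCoeff at hQx
    linarith
  hasDerivAt_weight x hx := by
    have hvx := (one_sub_sq_pos_of_mem_Icc h1 hx).ne'
    refine (hasDerivAt_one_sub_sq x).congr_deriv ?_
    field_simp
    ring
  hasDerivAt_shift x hx := by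
    have hvx := (one_sub_sq_pos_of_mem_Icc h1 hx).ne'
    refine ((hasDerivAt_id x).neg.div_const 2).congr_deriv ?_
    unfold legendreCoeff
    field_simp
    ring
  differentiableAt_potential x hx := by
    have hvx := (one_sub_sq_pos_of_mem_Icc h1 hx).ne'
    fun_prop (disch := exact hvx)

lemma IsSturmSystemOn.sqrt_legendreCoeff_mul_sq_le
    (hS : IsSturmSystemOn (fun x => 1 - x ^ 2) (legendreCoeff M μ) (Set.Icc 0 x₀) Y Z)
    (hμ : 0 ≤ μ) (h0 : 0 ≤ x₀) (h1 : x₀ < 1) (hQ : 0 < legendreCoeff M μ x₀) :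
    √(legendreCoeff M μ x₀) * Y x₀ ^ 2 ≤ √(M - μ) * Y 0 ^ 2 + Z 0 ^ 2 / √(M - μ) := by
  have hL := isLiouvilleTransformOn_legendreCoeff hμ h1 hQ
  have h0mem : (0 : ℝ) ∈ Set.Icc 0 x₀ := ⟨le_rfl, h0⟩
  have hcoeff : legendreCoeff M μ 0 = M - μ := by simp [legendreCoeff]
  have hr : 0 < √(M - μ) := hcoeff ▸ sqrt_pos.2 (hL.weight_pos 0 h0mem)
  have hq := one_le_legendrePotential hμ h1 hQ h0mem
  calc √(legendreCoeff M μ x₀) * Y x₀ ^ 2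
      ≤ soninEnergy _ _ _ Y Z x₀ := hL.sqrt_mul_sq_le_soninEnergy ⟨h0, le_rfl⟩
    _ ≤ soninEnergy _ _ _ Y Z 0 :=
      hS.antitoneOn_soninEnergy hL (convex_Icc 0 x₀) (monotoneOn_legendrePotential hμ h1 hQ)
        h0mem ⟨h0, le_rfl⟩ h0
    _ = √(M - μ) * Y 0 ^ 2 + Z 0 ^ 2 / (√(M - μ) * legendrePotential M μ 0) := by
      simp [soninEnergy, hcoeff]
    _ ≤ √(M - μ) * Y 0 ^ 2 + Z 0 ^ 2 / √(M - μ) := by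
      gcongr
      exact le_mul_of_one_le_right hr.le hq

lemma IsSturmSystemOn.sq_add_sq_div_le_of_eq_zero
    (hS : IsSturmSystemOn (fun x => 1 - x ^ 2) (legendreCoeff M μ) (Set.Icc 0 x₀) Y Z)
    (hμ : 1 / 4 ≤ μ) (h0 : 0 ≤ x₀) (h1 : x₀ < 1) (hQ : 0 < legendreCoeff M μ x₀) (hZ : Z x₀ = 0) :
    Y 0 ^ 2 + Z 0 ^ 2 / (M - μ + 1 / 2) ≤
      √(1 - x₀ ^ 2) * Y x₀ ^ 2 * (1 + x₀ ^ 2 / (4 * legendreCoeff M μ x₀ + (2 - x₀ ^ 2))) := by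
  have hL := isLiouvilleTransformOn_one_sub_sq hμ h1 hQ
  have h0mem : (0 : ℝ) ∈ Set.Icc 0 x₀ := ⟨le_rfl, h0⟩
  have hx₀ : x₀ ∈ Set.Icc 0 x₀ := ⟨h0, le_rfl⟩
  have hanti : AntitoneOn (fun x => M + 1 / 4 - (μ - 1 / 4) / (1 - x ^ 2)) (Set.Icc 0 x₀) := by
    intro x hx y hy hxy
    have hx0 := hx.1
    have hvy := one_sub_sq_pos_of_mem_Icc h1 hy
    dsimp only
    gcongr
  have hv := one_sub_sq_pos_of_mem_Icc h1 hx₀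
  calc Y 0 ^ 2 + Z 0 ^ 2 / (M - μ + 1 / 2)
      = soninEnergy _ _ _ Y Z 0 := by
        simp only [soninEnergy]
        norm_num
        ring_nf
    _ ≤ soninEnergy _ _ _ Y Z x₀ :=
      hS.monotoneOn_soninEnergy hL (convex_Icc 0 x₀) hanti h0mem hx₀ h0
    _ = _ := by
      have hq := (hL.potential_pos x₀ hx₀).ne'
      have hden : 4 * legendreCoeff M μ x₀ + (2 - x₀ ^ 2) =
          4 * √(1 - x₀ ^ 2) ^ 2 * (M + 1 / 4 - (μ - 1 / 4) / (1 - x₀ ^ 2)) := by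
        rw [sq_sqrt hv.le, legendreCoeff]
        field_simp
        ring
      rw [soninEnergy, hZ, hden]
      set q := M + 1 / 4 - (μ - 1 / 4) / (1 - x₀ ^ 2)
      field_simp
      ring

end LegendreSystem

/-! ### Critical points and the Gegenbauer equation -/

section CriticalPoint

variable {v Q Y Z : ℝ → ℝ} {s : Set ℝ}

namespace IsSturmSystemOn

lemma mono {t : Set ℝ} (hS : IsSturmSystemOn v Q s Y Z) (hts : t ⊆ s) :
    IsSturmSystemOn v Q t Y Z where
  hasDerivAt_fst x hx := hS.hasDerivAt_fst x (hts hx)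
  hasDerivAt_snd x hx := hS.hasDerivAt_snd x (hts hx)

lemma hasDerivAt_sq (hS : IsSturmSystemOn v Q s Y Z) {x : ℝ} (hx : x ∈ s) :
    HasDerivAt (fun y => Y y ^ 2) (2 * (Y x * Z x) / v x) x :=
  ((hS.hasDerivAt_fst x hx).pow 2).congr_deriv (by push_cast; ring)

lemma snd_eq_zero_of_isLocalMax (hS : IsSturmSystemOn v Q s Y Z) {x : ℝ} (hx : x ∈ s)
    (hv : v x ≠ 0) (hY : Y x ≠ 0) (hmax : IsLocalMax (fun y => Y y ^ 2) x) : Z x = 0 := by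
  simpa [hv, hY] using hmax.hasDerivAt_eq_zero (hS.hasDerivAt_sq hx)

lemma mul_nonpos_of_isMaxOn_left {a b : ℝ} (hab : a < b) (hS : IsSturmSystemOn v Q s Y Z)
    (ha : a ∈ s) (hv : 0 < v a) (hmax : IsMaxOn (fun y => Y y ^ 2) (Set.Icc a b) a) :
    Y a * Z a ≤ 0 := by
  have hcone : b - a ∈ posTangentConeAt (Set.Icc a b) a :=
    sub_mem_posTangentConeAt_of_segment_subset (segment_eq_Icc hab.le).subset
  have h : (b - a) * (2 * (Y a * Z a) / v a) ≤ 0 := by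
    simpa using hmax.localize.hasFDerivWithinAt_nonpos
      (hS.hasDerivAt_sq ha).hasFDerivAt.hasFDerivWithinAt hcone
  have h' := nonpos_of_mul_nonpos_right h (sub_pos.2 hab)
  rw [div_le_iff₀ hv] at h'
  linarith

lemma exists_isMaxOn_snd_eq_zero {a b : ℝ} (hS : IsSturmSystemOn v Q (Set.Ico a b) Y Z)
    (hv : ∀ x ∈ Set.Ico a b, 0 < v x) (hY : ContinuousOn Y (Set.Icc a b)) (hb : Y b = 0)
    (ha : 0 ≤ Y a * Z a) (hne : ∃ y ∈ Set.Icc a b, Y y ≠ 0) :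
    ∃ x ∈ Set.Ico a b, Z x = 0 ∧ Y x ≠ 0 ∧ IsMaxOn (fun y => Y y ^ 2) (Set.Icc a b) x := by
  obtain ⟨y, hy, hYy⟩ := hne
  obtain ⟨x, hx, hmax⟩ := isCompact_Icc.exists_isMaxOn ⟨y, hy⟩ (hY.pow 2)
  have hYx : Y x ≠ 0 := by
    have h : Y y ^ 2 ≤ Y x ^ 2 := hmax hy
    have : 0 < Y y ^ 2 := by positivity
    exact fun h0 => absurd h (by simpa [h0])
  have hxb : x < b := hx.2.lt_of_ne fun h => hYx (h ▸ hb)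
  refine ⟨x, ⟨hx.1, hxb⟩, ?_, hYx, hmax⟩
  rcases hx.1.eq_or_lt with rfl | hax
  · have hmem := Set.left_mem_Ico.2 hxb
    have h0 := (mul_nonpos_of_isMaxOn_left hxb hS hmem (hv _ hmem) hmax).antisymm ha
    exact (mul_eq_zero.1 h0).resolve_left hYx
  · have hmem : x ∈ Set.Ico a b := ⟨hax.le, hxb⟩
    exact hS.snd_eq_zero_of_isLocalMax hmem (hv x hmem).ne' hYx
      (hmax.isLocalMax (Icc_mem_nhds hax hxb))

end IsSturmSystemOn

end CriticalPoint

/-- `u` solves the Gegenbauer equation `(1 - x²) u'' - 2 (l + 1) x u' + A u = 0`, which is the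
equation of the `l`-th derivative of a Legendre function. -/
structure IsGegenbauerSolution (l : ℕ) (A : ℝ) (u : ℝ → ℝ) : Prop where
  differentiable : Differentiable ℝ u
  differentiable_deriv : Differentiable ℝ (deriv u)
  ode : ∀ x, (1 - x ^ 2) * deriv (deriv u) x - 2 * (l + 1) * x * deriv u x + A * u x = 0

/-- The function `(1 - x²) ^ (l / 2) u`, which is `P_m^l` when `u` is the `l`-th derivative of the
Legendre polynomial `P_m`. -/
noncomputable def assocFun (l : ℕ) (u : ℝ → ℝ) (x : ℝ) : ℝ :=
  √(1 - x ^ 2) ^ l * u x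

/-- The quasi-derivative `(1 - x²) Y'` of `Y = assocFun l u`. -/
noncomputable def assocFlux (l : ℕ) (u : ℝ → ℝ) (x : ℝ) : ℝ :=
  √(1 - x ^ 2) ^ l * ((1 - x ^ 2) * deriv u x - l * x * u x)

section AssocFun

lemma hasDerivAt_sqrt_one_sub_sq_pow (n : ℕ) {x : ℝ} (hx : 0 < 1 - x ^ 2) :
    HasDerivAt (fun y : ℝ => √(1 - y ^ 2) ^ n) (-(n * x * √(1 - x ^ 2) ^ n) / (1 - x ^ 2)) x := by
  refine (((hasDerivAt_one_sub_sq x).sqrt hx.ne').pow n).congr_deriv ?_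
  have hs : √(1 - x ^ 2) ^ 2 = 1 - x ^ 2 := sq_sqrt hx.le
  have hs0 : √(1 - x ^ 2) ≠ 0 := (sqrt_pos.2 hx).ne'
  rw [← hs]
  rcases n with _ | n
  · simp
  · rw [sqrt_sq (sqrt_nonneg _)]
    push_cast
    field_simp
    ring

variable {l : ℕ} {u : ℝ → ℝ}

lemma assocFun_zero_right : assocFun l u 0 = u 0 := by
  simp [assocFun]

lemma assocFlux_zero_right : assocFlux l u 0 = deriv u 0 := by
  simp [assocFlux]

lemma assocFun_one (hl : l ≠ 0) : assocFun l u 1 = 0 := by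
  simp [assocFun, hl]

lemma assocFun_neg_one (hl : l ≠ 0) : assocFun l u (-1) = 0 := by
  simp [assocFun, hl]

lemma continuous_assocFun (hu : Continuous u) : Continuous (assocFun l u) := by
  unfold assocFun
  fun_prop

lemma one_sub_sq_pow_mul_eq {x : ℝ} (hx : 0 ≤ 1 - x ^ 2) :
    (1 - x ^ 2) ^ l * u x = √(1 - x ^ 2) ^ l * assocFun l u x := by
  rw [assocFun, ← mul_assoc, ← mul_pow, mul_self_sqrt hx]

lemma assocFun_mul_assocFlux {x : ℝ} (hx : 0 ≤ 1 - x ^ 2) :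
    assocFun l u x * assocFlux l u x =
      (1 - x ^ 2) ^ l * ((1 - x ^ 2) * (u x * deriv u x) - l * x * u x ^ 2) := by
  have h : √(1 - x ^ 2) ^ l * √(1 - x ^ 2) ^ l = (1 - x ^ 2) ^ l := by
    rw [← mul_pow, mul_self_sqrt hx]
  rw [assocFun, assocFlux, ← h]
  ring

lemma assocFlux_eq_zero_iff {x : ℝ} (hx : 0 < 1 - x ^ 2) :
    assocFlux l u x = 0 ↔ (1 - x ^ 2) * deriv u x = l * x * u x := by
  simp [assocFlux, (sqrt_pos.2 hx).ne', sub_eq_zero]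

end AssocFun

namespace IsGegenbauerSolution

variable {l : ℕ} {A : ℝ} {u : ℝ → ℝ}

lemma comp_neg (h : IsGegenbauerSolution l A u) : IsGegenbauerSolution l A fun x => u (-x) := by
  have hd : deriv (fun x => u (-x)) = fun x => -deriv u (-x) := funext fun x => deriv_comp_neg u x
  refine ⟨h.differentiable.comp differentiable_neg, ?_, fun x => ?_⟩
  · rw [hd]
    exact (h.differentiable_deriv.comp differentiable_neg).neg
  · rw [hd, deriv.fun_neg, deriv_comp_neg]
    linear_combination h.ode (-x)

lemma isSturmSystemOn (h : IsGegenbauerSolution l A u) :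
    IsSturmSystemOn (fun x => 1 - x ^ 2) (legendreCoeff (A + l * (l + 1)) (l ^ 2)) (Set.Ioo (-1) 1)
      (assocFun l u) (assocFlux l u) where
  hasDerivAt_fst x hx := by
    have hv : 0 < 1 - x ^ 2 := by nlinarith [hx.1, hx.2]
    refine ((hasDerivAt_sqrt_one_sub_sq_pow l hv).mul
      (h.differentiable x).hasDerivAt).congr_deriv ?_
    unfold assocFlux
    field_simp
    ring
  hasDerivAt_snd x hx := by
    have hv : 0 < 1 - x ^ 2 := by nlinarith [hx.1, hx.2]
    refine ((hasDerivAt_sqrt_one_sub_sq_pow l hv).mul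
      (((hasDerivAt_one_sub_sq x).mul (h.differentiable_deriv x).hasDerivAt).sub
        (((hasDerivAt_id x).const_mul (l : ℝ)).mul (h.differentiable x).hasDerivAt))).congr_deriv ?_
    have hode : (1 - x ^ 2) * deriv (deriv u) x = 2 * (l + 1) * x * deriv u x - A * u x := by
      linear_combination h.ode x
    simp only [Pi.mul_apply, Pi.sub_apply, id_eq]
    rw [hode]
    unfold assocFun legendreCoeff
    field_simp
    ring

lemma hasDerivAt_wronskian (h : IsGegenbauerSolution l A u) {f f' : ℝ → ℝ} {x f'' : ℝ}
    (hf : HasDerivAt f (f' x) x) (hf' : HasDerivAt f' f'' x) :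
    HasDerivAt (fun x => (1 - x ^ 2) ^ (l + 1) * (deriv u x * f x - u x * f' x))
      (-((1 - x ^ 2) ^ l * u x * ((1 - x ^ 2) * f'' - 2 * (l + 1) * x * f' x + A * f x))) x := by
  refine (((hasDerivAt_one_sub_sq x).pow (l + 1)).mul
    (((h.differentiable_deriv x).hasDerivAt.mul hf).sub
      ((h.differentiable x).hasDerivAt.mul hf'))).congr_deriv ?_
  simp only [Pi.mul_apply, Pi.sub_apply, Pi.pow_apply, add_tsub_cancel_right]
  push_cast
  linear_combination (1 - x ^ 2) ^ l * f x * h.ode x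

lemma hasDerivAt_flux (h : IsGegenbauerSolution l A u) (x : ℝ) :
    HasDerivAt (fun x => (1 - x ^ 2) ^ (l + 1) * deriv u x) (-(A * ((1 - x ^ 2) ^ l * u x))) x := by
  convert h.hasDerivAt_wronskian (hasDerivAt_const x 1) (hasDerivAt_const x (0 : ℝ)) using 1
  · simp
  · ring

end IsGegenbauerSolution

/-- The logarithmic derivative `(1 - x²) f' / (x f)` of the barrier
`f = exp (-(c (1 - x²) + d (1 - x²)²))` with `c = A / (4 (l + 1))` and `d = c² / (2 (l + 2))`, to
which solutions of the Gegenbauer equation are compared near `x = 1`. By the choice of `c`, the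
logarithmic derivatives of `f` and of a solution agree at `x = 1`. -/
noncomputable def barrierRate (l : ℕ) (A x : ℝ) : ℝ :=
  A * (1 - x ^ 2) / (2 * (l + 1)) * (1 + A * (1 - x ^ 2) / (2 * (l + 1)) / (2 * (l + 2)))

section BarrierRate

variable {l : ℕ} {A : ℝ}

lemma antitoneOn_barrierRate (hA : 0 ≤ A) : AntitoneOn (barrierRate l A) (Set.Icc 0 1) := by
  intro x hx y hy hxy
  have hx0 := hx.1
  have hy0 : 0 ≤ 1 - y ^ 2 := by nlinarith [hy.1, hy.2]
  have hxy2 : 1 - y ^ 2 ≤ 1 - x ^ 2 := by gcongr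
  have hx2 : 0 ≤ 1 - x ^ 2 := hy0.trans hxy2
  unfold barrierRate
  gcongr

lemma exists_barrierRate_threshold (hl : l ≠ 0) (hA : 0 ≤ A) :
    ∃ ξ ∈ Set.Ico (0 : ℝ) 1, l * ξ ≤ ξ * barrierRate l A ξ ∧
      ∀ x ∈ Set.Icc ξ 1, barrierRate l A x ≤ l := by
  rcases le_total (barrierRate l A 0) l with h | h
  · exact ⟨0, by simp, by simp, fun x hx =>
      (antitoneOn_barrierRate hA (by simp) hx hx.1).trans h⟩
  · have hcont : ContinuousOn (barrierRate l A) (Set.Icc 0 1) := by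
      unfold barrierRate
      fun_prop
    have h1 : barrierRate l A 1 = 0 := by simp [barrierRate]
    obtain ⟨ξ, hξ, hξl⟩ :=
      intermediate_value_Icc' zero_le_one hcont ⟨by simp [h1], h⟩
    have hξ1 : ξ ≠ 1 := by
      rintro rfl
      exact hl (by exact_mod_cast hξl.symm.trans h1)
    exact ⟨ξ, ⟨hξ.1, hξ.2.lt_of_ne hξ1⟩, by rw [hξl, mul_comm], fun x hx =>
      (antitoneOn_barrierRate hA hξ ⟨hξ.1.trans hx.1, hx.2⟩ hx.1).trans hξl.le⟩

lemma barrier_operator_nonneg (l : ℕ) {c d x : ℝ} (hc : 0 ≤ c) (hd : 2 * (l + 2) * d = c ^ 2)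
    (hx : 0 ≤ 1 - x ^ 2) :
    0 ≤ (1 - x ^ 2) * (2 * (c + 2 * d * (1 - x ^ 2)) - 8 * d * x ^ 2 +
        (2 * x * (c + 2 * d * (1 - x ^ 2))) ^ 2) -
      2 * (l + 1) * x * (2 * x * (c + 2 * d * (1 - x ^ 2))) + 4 * (l + 1) * c := by
  have hd0 : 0 ≤ d := nonneg_of_mul_nonneg_right (hd ▸ sq_nonneg c) (by positivity)
  have hsq : 0 ≤ (c + 2 * d * (1 - x ^ 2)) ^ 2 - 2 * (l + 2) * d := by
    rw [hd, sub_nonneg]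
    gcongr
    exact le_add_of_nonneg_right (by positivity)
  calc 0 ≤ (1 - x ^ 2) * ((4 * l + 6) * c + 4 * d * (1 - x ^ 2) +
        4 * x ^ 2 * ((c + 2 * d * (1 - x ^ 2)) ^ 2 - 2 * (l + 2) * d)) := by positivity
    _ = _ := by ring

end BarrierRate

namespace IsGegenbauerSolution

variable {l : ℕ} {A : ℝ} {u : ℝ → ℝ}

lemma sq_mul_deriv_le_of_nonneg (h : IsGegenbauerSolution l A u) {f f' f'' : ℝ → ℝ} {ξ : ℝ}
    (hξ : ξ ∈ Set.Ico (0 : ℝ) 1) (hf : ∀ x, HasDerivAt f (f' x) x)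
    (hf' : ∀ x, HasDerivAt f' (f'' x) x)
    (hL : ∀ x ∈ Set.Icc ξ 1, 0 ≤ (1 - x ^ 2) * f'' x - 2 * (l + 1) * x * f' x + A * f x)
    (hu : ∀ x ∈ Set.Icc ξ 1, 0 ≤ u ξ * u x) :
    u ξ ^ 2 * f' ξ ≤ u ξ * deriv u ξ * f ξ := by
  have hd := fun x => (h.hasDerivAt_wronskian (hf x) (hf' x)).const_mul (u ξ)
  have hanti : AntitoneOn (fun x => u ξ * ((1 - x ^ 2) ^ (l + 1) * (deriv u x * f x - u x * f' x)))
      (Set.Icc ξ 1) := by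
    refine antitoneOn_of_hasDerivWithinAt_nonpos (convex_Icc ξ 1)
      (HasDerivAt.continuousOn fun x _ => hd x) (fun x _ => (hd x).hasDerivWithinAt) fun x hx => ?_
    have hx' := interior_subset hx
    have hv : 0 ≤ 1 - x ^ 2 := by nlinarith [hξ.1, hx'.1, hx'.2]
    have := mul_nonneg (mul_nonneg (pow_nonneg hv l) (hu x hx')) (hL x hx')
    linarith
  have hle := hanti (Set.left_mem_Icc.2 hξ.2.le) (Set.right_mem_Icc.2 hξ.2.le) hξ.2.le
  have hv : 0 < (1 - ξ ^ 2) ^ (l + 1) := pow_pos (by nlinarith [hξ.1, hξ.2]) _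
  simp only [one_pow, sub_self, ne_eq, l.succ_ne_zero, not_false_eq_true, zero_pow, zero_mul,
    mul_zero] at hle
  have := nonneg_of_mul_nonneg_right (a := (1 - ξ ^ 2) ^ (l + 1))
    (b := u ξ * (deriv u ξ * f ξ - u ξ * f' ξ)) (by linarith) hv
  linarith

lemma mul_barrierRate_mul_sq_le (h : IsGegenbauerSolution l A u) (hA : 0 ≤ A) {ξ : ℝ}
    (hξ : ξ ∈ Set.Ico (0 : ℝ) 1) (hu : ∀ x ∈ Set.Icc ξ 1, 0 ≤ u ξ * u x) :
    ξ * barrierRate l A ξ * u ξ ^ 2 ≤ (1 - ξ ^ 2) * (u ξ * deriv u ξ) := by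
  set c := A / (4 * (l + 1)) with hc
  set d := c ^ 2 / (2 * (l + 2)) with hd
  set f : ℝ → ℝ := fun x => exp (-(c * (1 - x ^ 2) + d * (1 - x ^ 2) ^ 2))
  set b : ℝ → ℝ := fun x => 2 * x * (c + 2 * d * (1 - x ^ 2))
  have hcA : A = 4 * (l + 1) * c := by rw [hc]; field_simp
  have hc0 : 0 ≤ c := by positivity
  have hdc : 2 * (l + 2) * d = c ^ 2 := by rw [hd]; field_simp
  have hf : ∀ x, HasDerivAt f (b x * f x) x := fun x => by
    have hv := hasDerivAt_one_sub_sq x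
    refine ((hv.const_mul c).add ((hv.pow 2).const_mul d)).neg.exp.congr_deriv ?_
    simp only [Pi.add_apply, Pi.neg_apply, Pi.pow_apply, f, b]
    push_cast
    ring
  have hb : ∀ x, HasDerivAt b (2 * (c + 2 * d * (1 - x ^ 2)) - 8 * d * x ^ 2) x := fun x => by
    refine (((hasDerivAt_id x).const_mul 2).mul
      (((hasDerivAt_one_sub_sq x).const_mul (2 * d)).const_add c)).congr_deriv ?_
    simp only [id_eq]
    ring
  have hle := h.sq_mul_deriv_le_of_nonneg hξ hf (fun x => (hb x).mul (hf x)) (fun x hx => ?_) hu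
  · have hg : ξ * barrierRate l A ξ = (1 - ξ ^ 2) * b ξ := by
      simp only [barrierRate, b, hd, hcA]
      field_simp
      ring
    have hle' : u ξ ^ 2 * b ξ ≤ u ξ * deriv u ξ :=
      le_of_mul_le_mul_right (by linarith) (exp_pos _ : 0 < f ξ)
    have hv : 0 ≤ 1 - ξ ^ 2 := by nlinarith [hξ.1, hξ.2]
    calc ξ * barrierRate l A ξ * u ξ ^ 2 = (1 - ξ ^ 2) * (u ξ ^ 2 * b ξ) := by rw [hg]; ring
      _ ≤ (1 - ξ ^ 2) * (u ξ * deriv u ξ) := by gcongr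
  · have hv : 0 ≤ 1 - x ^ 2 := by nlinarith [hξ.1, hx.1, hx.2]
    calc 0 ≤ f x * _ := mul_nonneg (exp_pos _).le (barrier_operator_nonneg l hc0 hdc hv)
      _ = _ := by
        rw [hcA]
        ring

lemma hasDerivAt_flux_sub_pow (h : IsGegenbauerSolution l A u) (α β : ℝ) {x : ℝ}
    (hx : 0 < 1 - x ^ 2) :
    HasDerivAt (fun x => α * ((1 - x ^ 2) ^ (l + 1) * deriv u x) - β * √(1 - x ^ 2) ^ (l + 2))
      (√(1 - x ^ 2) ^ l * (β * (l + 2) * x - α * A * assocFun l u x)) x := by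
  refine (((h.hasDerivAt_flux x).const_mul α).sub
    ((hasDerivAt_sqrt_one_sub_sq_pow (l + 2) hx).const_mul β)).congr_deriv ?_
  rw [one_sub_sq_pow_mul_eq hx.le, pow_add, sq_sqrt hx.le]
  push_cast
  field_simp
  ring

-- Since `|Y| ≤ |Y x₀|` on `[x₀, 1]` and `x₀ ≤ x`, the derivative `-A (1 - x²)^(l/2) Y` of the flux
-- is controlled by the exact derivative `(l + 2) x (1 - x²)^(l/2)` of `-(1 - x²)^(l/2 + 1)`.
lemma monotoneOn_flux_sub_pow (h : IsGegenbauerSolution l A u) (hA : 0 ≤ A) {x₀ : ℝ} (h0 : 0 ≤ x₀)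
    (hmax : IsMaxOn (fun x => assocFun l u x ^ 2) (Set.Icc x₀ 1) x₀) :
    MonotoneOn (fun x => (l + 2) * x₀ * assocFun l u x₀ * ((1 - x ^ 2) ^ (l + 1) * deriv u x) -
      A * assocFun l u x₀ ^ 2 * √(1 - x ^ 2) ^ (l + 2)) (Set.Icc x₀ 1) := by
  set Y := assocFun l u
  have hcont : Continuous fun x => (l + 2) * x₀ * Y x₀ * ((1 - x ^ 2) ^ (l + 1) * deriv u x) -
      A * Y x₀ ^ 2 * √(1 - x ^ 2) ^ (l + 2) := by
    have := h.differentiable_deriv.continuous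
    fun_prop
  refine monotoneOn_of_hasDerivWithinAt_nonneg (convex_Icc x₀ 1) hcont.continuousOn
    (fun x hx => (h.hasDerivAt_flux_sub_pow _ _ ?_).hasDerivWithinAt) fun x hx => ?_
  · rw [interior_Icc] at hx
    nlinarith [hx.1, hx.2]
  · have hx' := interior_subset hx
    have hYY : Y x₀ * Y x ≤ Y x₀ ^ 2 := by
      have : Y x ^ 2 ≤ Y x₀ ^ 2 := hmax hx'
      linarith [two_mul_le_add_sq (Y x₀) (Y x)]
    have hxY : x₀ * (Y x₀ * Y x) ≤ x * Y x₀ ^ 2 :=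
      (mul_le_mul_of_nonneg_left hYY h0).trans (mul_le_mul_of_nonneg_right hx'.1 (sq_nonneg _))
    have := mul_nonneg (by positivity : 0 ≤ A * (l + 2)) (sub_nonneg.2 hxY)
    exact mul_nonneg (by positivity) (by linarith)

lemma turning_point_le (h : IsGegenbauerSolution l A u) (hA : 0 ≤ A) {x₀ : ℝ}
    (hx₀ : x₀ ∈ Set.Ico (0 : ℝ) 1) (hZ : assocFlux l u x₀ = 0) (hY : assocFun l u x₀ ≠ 0)
    (hmax : IsMaxOn (fun x => assocFun l u x ^ 2) (Set.Icc x₀ 1) x₀) :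
    l * (l + 2) * x₀ ^ 2 ≤ A * (1 - x₀ ^ 2) := by
  have hv : 0 < 1 - x₀ ^ 2 := by nlinarith [hx₀.1, hx₀.2]
  have hle := h.monotoneOn_flux_sub_pow hA hx₀.1 hmax (Set.left_mem_Icc.2 hx₀.2.le)
    (Set.right_mem_Icc.2 hx₀.2.le) hx₀.2.le
  have hflux : (1 - x₀ ^ 2) ^ (l + 1) * deriv u x₀ =
      l * x₀ * (√(1 - x₀ ^ 2) ^ l * assocFun l u x₀) := by
    rw [← one_sub_sq_pow_mul_eq hv.le, pow_succ, mul_assoc, (assocFlux_eq_zero_iff hv).1 hZ]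
    ring
  have hone : (1 - 1 ^ 2 : ℝ) = 0 := by norm_num
  simp only [hflux, hone, sqrt_zero, zero_pow (Nat.succ_ne_zero _), zero_mul, mul_zero,
    sub_zero] at hle
  rw [pow_add, sq_sqrt hv.le] at hle
  have hpos : 0 < assocFun l u x₀ ^ 2 * √(1 - x₀ ^ 2) ^ l := by
    have := sqrt_pos.2 hv
    positivity
  exact le_of_mul_le_mul_left (by linarith) hpos

-- Either `u` vanishes at some `a` beyond the threshold, or `u` keeps its sign there and the barrier
-- comparison makes `Y²` nondecreasing at the threshold itself.
lemma exists_nonneg_start (h : IsGegenbauerSolution l A u) (hl : l ≠ 0) (hA : 0 ≤ A)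
    (hu : u 1 ≠ 0) :
    ∃ a ∈ Set.Ico (0 : ℝ) 1, 0 ≤ assocFun l u a * assocFlux l u a ∧
      ∀ x ∈ Set.Icc a 1, barrierRate l A x ≤ l := by
  obtain ⟨ξ, hξ, hξl, hrate⟩ := exists_barrierRate_threshold hl hA
  by_cases hz : ∃ z ∈ Set.Ico ξ 1, u z = 0
  · obtain ⟨z, hz, huz⟩ := hz
    exact ⟨z, ⟨hξ.1.trans hz.1, hz.2⟩, by simp [assocFun, huz], fun x hx =>
      hrate x ⟨hz.1.trans hx.1, hx.2⟩⟩
  · push Not at hz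
    have hne : ∀ x ∈ Set.Icc ξ 1, u x ≠ 0 := fun x hx =>
      hx.2.lt_or_eq.elim (fun h1 => hz x ⟨hx.1, h1⟩) (fun h1 => h1 ▸ hu)
    have hsign : ∀ x ∈ Set.Icc ξ 1, 0 ≤ u ξ * u x := by
      intro x hx
      by_contra! hneg
      have h0 : (0 : ℝ) ∈ Set.uIcc (u ξ) (u x) :=
        Set.mem_uIcc.2 ((mul_nonpos_iff.1 hneg.le).symm.imp id And.symm)
      obtain ⟨y, hy, huy⟩ := intermediate_value_uIcc h.differentiable.continuous.continuousOn h0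
      rw [Set.uIcc_of_le hx.1] at hy
      exact hne y ⟨hy.1, hy.2.trans hx.2⟩ huy
    have hv : 0 ≤ 1 - ξ ^ 2 := by nlinarith [hξ.1, hξ.2]
    refine ⟨ξ, hξ, ?_, hrate⟩
    rw [assocFun_mul_assocFlux hv]
    refine mul_nonneg (pow_nonneg hv l) (sub_nonneg.2 ?_)
    calc l * ξ * u ξ ^ 2 ≤ ξ * barrierRate l A ξ * u ξ ^ 2 := by gcongr
      _ ≤ (1 - ξ ^ 2) * (u ξ * deriv u ξ) := h.mul_barrierRate_mul_sq_le hA hξ hsign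

lemma exists_assocFun_ne_zero (h : IsGegenbauerSolution l A u) (hu : u 1 ≠ 0) {a : ℝ}
    (ha : a ∈ Set.Ico (0 : ℝ) 1) : ∃ y ∈ Set.Icc a 1, assocFun l u y ≠ 0 := by
  have hev : ∀ᶠ y in nhdsWithin (1 : ℝ) (Set.Iio 1), u y ≠ 0 :=
    nhdsWithin_le_nhds (h.differentiable.continuous.continuousAt.eventually_ne hu)
  obtain ⟨y, huy, hy⟩ := (hev.and (Ioo_mem_nhdsLT ha.2)).exists
  have hv : 0 < 1 - y ^ 2 := by nlinarith [ha.1, hy.1, hy.2]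
  exact ⟨y, Set.Ioo_subset_Icc_self hy, mul_ne_zero (pow_pos (sqrt_pos.2 hv) l).ne' huy⟩

lemma exists_critical_point (h : IsGegenbauerSolution l A u) (hl : l ≠ 0) (hA : 0 ≤ A)
    (hu : u 1 ≠ 0) :
    ∃ x ∈ Set.Ico (0 : ℝ) 1, barrierRate l A x ≤ l ∧ assocFlux l u x = 0 ∧ assocFun l u x ≠ 0 ∧
      IsMaxOn (fun y => assocFun l u y ^ 2) (Set.Icc x 1) x := by
  obtain ⟨a, ha, hstart, hrate⟩ := h.exists_nonneg_start hl hA hu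
  have hsub : Set.Ico a 1 ⊆ Set.Ioo (-1) 1 := fun x hx => ⟨by linarith [ha.1, hx.1], hx.2⟩
  obtain ⟨x, hx, hZ, hY, hmax⟩ := (h.isSturmSystemOn.mono hsub).exists_isMaxOn_snd_eq_zero
    (fun x hx => by nlinarith [ha.1, hx.1, hx.2])
    (continuous_assocFun h.differentiable.continuous).continuousOn (assocFun_one hl) hstart
    (h.exists_assocFun_ne_zero hu ha)
  exact ⟨x, ⟨ha.1.trans hx.1, hx.2⟩, hrate x ⟨hx.1, hx.2.le⟩, hZ, hY,
    hmax.on_subset (Set.Icc_subset_Icc_left hx.1)⟩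

lemma mul_le_legendreCoeff (h : IsGegenbauerSolution l A u) (hA : 0 ≤ A) {x₀ : ℝ}
    (hx₀ : x₀ ∈ Set.Ico (0 : ℝ) 1) (hZ : assocFlux l u x₀ = 0) (hY : assocFun l u x₀ ≠ 0)
    (hmax : IsMaxOn (fun x => assocFun l u x ^ 2) (Set.Icc x₀ 1) x₀) :
    l * (1 + x₀ ^ 2) ≤ legendreCoeff (A + l * (l + 1)) (l ^ 2) x₀ := by
  have := h.turning_point_le hA hx₀ hZ hY hmax
  unfold legendreCoeff
  linarith

lemma isSturmSystemOn_Icc (h : IsGegenbauerSolution l A u) {x₀ : ℝ} (hx₀ : x₀ < 1) :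
    IsSturmSystemOn (fun x => 1 - x ^ 2) (legendreCoeff (A + l * (l + 1)) (l ^ 2)) (Set.Icc 0 x₀)
      (assocFun l u) (assocFlux l u) :=
  h.isSturmSystemOn.mono fun _ hx => ⟨neg_one_lt_zero.trans_le hx.1, hx.2.trans_lt hx₀⟩

lemma exists_energy_le (h : IsGegenbauerSolution l A u) (hl : l ≠ 0) (hA : 0 ≤ A) (hu : u 1 ≠ 0) :
    ∃ x ∈ Set.Ico (0 : ℝ) 1, barrierRate l A x ≤ l ∧
      u 0 ^ 2 + deriv u 0 ^ 2 / (A + l + 1 / 2) ≤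
        √(1 - x ^ 2) * assocFun l u x ^ 2 * (1 + 1 / (8 * l)) := by
  obtain ⟨x, hx, hrate, hZ, hY, hmax⟩ := h.exists_critical_point hl hA hu
  have hl1 : (1 : ℝ) ≤ l := by exact_mod_cast Nat.one_le_iff_ne_zero.2 hl
  have hQ := h.mul_le_legendreCoeff hA hx hZ hY hmax
  have hQ0 : 0 < legendreCoeff (A + l * (l + 1)) (l ^ 2) x := lt_of_lt_of_le (by positivity) hQ
  have hle := (h.isSturmSystemOn_Icc hx.2).sq_add_sq_div_le_of_eq_zero (by nlinarith) hx.1 hx.2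
    hQ0 hZ
  rw [assocFun_zero_right, assocFlux_zero_right,
    show A + l * (l + 1) - (l : ℝ) ^ 2 + 1 / 2 = A + l + 1 / 2 by ring] at hle
  have hfrac : x ^ 2 / (4 * legendreCoeff (A + l * (l + 1)) (l ^ 2) x + (2 - x ^ 2)) ≤
      1 / (8 * l) := by
    have hx2 : x ^ 2 < 1 := by nlinarith [hx.1, hx.2]
    rw [div_le_div_iff₀ (by linarith) (by positivity)]
    nlinarith
  exact ⟨x, hx, hrate, hle.trans (by gcongr)⟩

lemma sqrt_mul_sq_le_of_isMaxOn (h : IsGegenbauerSolution l A u) (hl : l ≠ 0) (hA : 0 ≤ A) {x₀ : ℝ}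
    (hx₀ : x₀ ∈ Set.Ico (0 : ℝ) 1) (hY : assocFun l u x₀ ≠ 0)
    (hmax : IsMaxOn (fun x => assocFun l u x ^ 2) (Set.Icc (-1) 1) x₀) :
    √l * assocFun l u x₀ ^ 2 ≤ √(A + l) * u 0 ^ 2 + deriv u 0 ^ 2 / √(A + l) := by
  have hmem : x₀ ∈ Set.Ioo (-1 : ℝ) 1 := ⟨neg_one_lt_zero.trans_le hx₀.1, hx₀.2⟩
  have hv : 1 - x₀ ^ 2 ≠ 0 := by nlinarith [hx₀.1, hx₀.2]
  have hZ := h.isSturmSystemOn.snd_eq_zero_of_isLocalMax hmem hv hY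
    (hmax.isLocalMax (Icc_mem_nhds hmem.1 hmem.2))
  have hQ := h.mul_le_legendreCoeff hA hx₀ hZ hY
    (hmax.on_subset (Set.Icc_subset_Icc_left hmem.1.le))
  have hl0 : (0 : ℝ) < l := by positivity
  have hQ0 : 0 < legendreCoeff (A + l * (l + 1)) (l ^ 2) x₀ := lt_of_lt_of_le (by positivity) hQ
  have hle := (h.isSturmSystemOn_Icc hx₀.2).sqrt_legendreCoeff_mul_sq_le (by positivity) hx₀.1
    hx₀.2 hQ0
  rw [assocFun_zero_right, assocFlux_zero_right,
    show A + l * (l + 1) - (l : ℝ) ^ 2 = A + l by ring] at hle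
  refine le_trans ?_ hle
  gcongr
  exact (le_mul_of_one_le_right hl0.le (by linarith [sq_nonneg x₀])).trans hQ

lemma sqrt_mul_sq_le (h : IsGegenbauerSolution l A u) (hl : l ≠ 0) (hA : 0 ≤ A) {x : ℝ}
    (hx : x ∈ Set.Icc (-1 : ℝ) 1) :
    √l * assocFun l u x ^ 2 ≤ √(A + l) * u 0 ^ 2 + deriv u 0 ^ 2 / √(A + l) := by
  obtain ⟨x₀, hx₀, hmax⟩ := isCompact_Icc.exists_isMaxOn ⟨x, hx⟩
    ((continuous_assocFun (l := l) h.differentiable.continuous).pow 2).continuousOn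
  suffices √l * assocFun l u x₀ ^ 2 ≤ √(A + l) * u 0 ^ 2 + deriv u 0 ^ 2 / √(A + l) from
    (mul_le_mul_of_nonneg_left (hmax hx) (sqrt_nonneg _)).trans this
  by_cases hY : assocFun l u x₀ = 0
  · rw [hY, zero_pow two_ne_zero, mul_zero]
    positivity
  rcases le_total 0 x₀ with h0 | h0
  · have h1 : x₀ ≠ 1 := fun h1 => hY (h1 ▸ assocFun_one hl)
    exact h.sqrt_mul_sq_le_of_isMaxOn hl hA ⟨h0, hx₀.2.lt_of_ne h1⟩ hY hmax
  · have h1 : -1 ≠ x₀ := fun h1 => hY (h1 ▸ assocFun_neg_one hl)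
    have hneg : ∀ y, assocFun l (fun z => u (-z)) (-y) = assocFun l u y := by simp [assocFun]
    have hmax' : IsMaxOn (fun y => assocFun l (fun z => u (-z)) y ^ 2) (Set.Icc (-1) 1) (-x₀) := by
      intro y hy
      have := hmax (show -y ∈ Set.Icc (-1 : ℝ) 1 from ⟨by linarith [hy.2], by linarith [hy.1]⟩)
      simpa [assocFun] using this
    simpa [hneg, deriv_comp_neg] using h.comp_neg.sqrt_mul_sq_le_of_isMaxOn hl hA
      ⟨neg_nonneg.2 h0, neg_lt.1 (hx₀.1.lt_of_ne h1)⟩ (by rwa [hneg]) hmax'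

end IsGegenbauerSolution

/-! ### Values of Legendre functions at the origin -/

section Rodrigues

open Polynomial

lemma iteratedDeriv_polynomial_eval {𝕜 : Type*} [NontriviallyNormedField 𝕜] (p : 𝕜[X]) (n : ℕ) :
    iteratedDeriv n (fun x => p.eval x) = fun x => (derivative^[n] p).eval x := by
  induction n with
  | zero => simp
  | succ n ih =>
    ext x
    rw [iteratedDeriv_succ, ih, Polynomial.deriv, Function.iterate_succ_apply']

lemma eval_iterate_derivative_eq_taylor_coeff {R : Type*} [CommSemiring R] (p : R[X]) (a : R)
    (n : ℕ) : (derivative^[n] p).eval a = n.factorial * (taylor a p).coeff n := by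
  rw [taylor_coeff, ← factorial_smul_hasseDeriv]
  simp

/-- The polynomial `(X² - 1) ^ m` of the Rodrigues formula. -/
noncomputable def rodriguesPoly (m : ℕ) : ℝ[X] :=
  (X ^ 2 - 1) ^ m

namespace rodriguesPoly

lemma mul_derivative (m : ℕ) :
    (X ^ 2 - 1) * derivative (rodriguesPoly m) = 2 * (m : ℝ[X]) * X * rodriguesPoly m := by
  rcases m with _ | m
  · simp [rodriguesPoly]
  · rw [rodriguesPoly, derivative_pow_succ]
    simp only [derivative_sub, derivative_X_sq, derivative_one, map_ofNat, map_add, map_natCast,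
      map_one]
    push_cast
    ring

lemma iterate_derivative_ode (m n : ℕ) :
    (X ^ 2 - 1) * derivative^[n + 2] (rodriguesPoly m) +
      2 * ((n : ℝ[X]) + 1 - (m : ℝ[X])) * X * derivative^[n + 1] (rodriguesPoly m) +
      ((n : ℝ[X]) + 1) * ((n : ℝ[X]) - 2 * (m : ℝ[X])) * derivative^[n] (rodriguesPoly m) = 0 := by
  have hsucc : ∀ k, derivative (derivative^[k] (rodriguesPoly m)) =
      derivative^[k + 1] (rodriguesPoly m) := fun k => (Function.iterate_succ_apply' _ _ _).symm
  induction n with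
  | zero =>
    have h := congrArg derivative (mul_derivative m)
    simp only [derivative_mul, derivative_sub, derivative_X_sq, derivative_one, derivative_X,
      derivative_natCast, derivative_ofNat, map_ofNat] at h
    simp only [zero_add, Function.iterate_succ_apply', Function.iterate_zero_apply, Nat.cast_zero]
    linear_combination h
  | succ n ih =>
    have h := congrArg derivative ih
    simp only [derivative_mul, derivative_add, derivative_sub, derivative_natCast, derivative_X,
      derivative_X_sq, derivative_one, derivative_zero, derivative_ofNat, map_ofNat, hsucc] at h
    push_cast
    linear_combination h

lemma eq_expand (m : ℕ) : rodriguesPoly m = expand ℝ 2 ((X + C (-1)) ^ m) := by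
  simp [rodriguesPoly, sub_eq_add_neg]

lemma coeff_two_mul (m j : ℕ) :
    (rodriguesPoly m).coeff (2 * j) = (-1) ^ (m - j) * m.choose j := by
  rw [eq_expand, mul_comm, coeff_expand_mul two_pos, coeff_X_add_C_pow]

lemma coeff_two_mul_add_one (m j : ℕ) : (rodriguesPoly m).coeff (2 * j + 1) = 0 := by
  rw [eq_expand, coeff_expand two_pos, if_neg (by lia)]

lemma eval_one_iterate_derivative_ne_zero {m r : ℕ} (hr : r ≤ m) :
    (derivative^[m + r] (rodriguesPoly m)).eval 1 ≠ 0 := by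
  have htaylor : taylor 1 (rodriguesPoly m) = X ^ m * (X + C 2) ^ m := by
    rw [rodriguesPoly, taylor_pow, ← mul_pow, map_ofNat]
    simp
    ring
  rw [eval_iterate_derivative_eq_taylor_coeff, htaylor, add_comm m r, coeff_X_pow_mul,
    coeff_X_add_C_pow]
  have := Nat.choose_pos hr
  positivity

lemma eval_zero_iterate_derivative (m n : ℕ) :
    (derivative^[n] (rodriguesPoly m)).eval 0 = n.factorial * (rodriguesPoly m).coeff n := by
  rw [eval_iterate_derivative_eq_taylor_coeff, taylor_zero]

lemma sq_eval_zero_iterate_derivative (j k : ℕ) :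
    (1 / (2 ^ (j + k) * (j + k).factorial) *
        (derivative^[2 * j] (rodriguesPoly (j + k))).eval 0) ^ 2 =
      (2 * j).factorial / (2 * k).factorial * (centralBinomRatio j * centralBinomRatio k) := by
  have h4 : ((2 : ℝ) ^ (j + k)) ^ 2 = 4 ^ j * 4 ^ k := by
    rw [← pow_mul, mul_comm, pow_mul, pow_add]
    norm_num
  have hsign : (((-1 : ℝ)) ^ k) ^ 2 = 1 := by
    rw [← pow_mul, mul_comm, pow_mul]
    norm_num
  rw [eval_zero_iterate_derivative, coeff_two_mul, Nat.add_sub_cancel_left, Nat.cast_add_choose,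
    centralBinomRatio.eq_factorial_div, centralBinomRatio.eq_factorial_div]
  simp only [mul_pow, div_pow, h4, hsign]
  field_simp

end rodriguesPoly

end Rodrigues

/-- The `l`-th derivative of the Legendre polynomial `P_m`, with the normalization of the spherical
harmonics. -/
noncomputable def normalizedLegendreDeriv (m l : ℕ) (x : ℝ) : ℝ :=
  √((m - l).factorial / (m + l).factorial) * iteratedDeriv l (legendreP m) x

namespace normalizedLegendreDeriv

open Polynomial

lemma assocFun_eq (m l : ℕ) (x : ℝ) :
    assocFun l (normalizedLegendreDeriv m l) x =
      √((m - l).factorial / (m + l).factorial) * assocLegendreP m l x :=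
  mul_left_comm _ _ _

lemma eq_eval (m l : ℕ) :
    normalizedLegendreDeriv m l = fun x =>
      √((m - l).factorial / (m + l).factorial) *
        (1 / (2 ^ m * m.factorial) * (derivative^[m + l] (rodriguesPoly m)).eval x) := by
  have hrod : (fun y : ℝ => (y ^ 2 - 1) ^ m) = fun y => (rodriguesPoly m).eval y := by
    simp [rodriguesPoly]
  have hleg : legendreP m = fun x =>
      (C (1 / (2 ^ m * m.factorial : ℝ)) * derivative^[m] (rodriguesPoly m)).eval x := by
    ext x
    rw [legendreP, hrod, iteratedDeriv_polynomial_eval, eval_C_mul]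
  ext x
  rw [normalizedLegendreDeriv, hleg, iteratedDeriv_polynomial_eval]
  dsimp only
  rw [iterate_derivative_C_mul, eval_C_mul, ← Function.iterate_add_apply, add_comm l]

lemma hasDerivAt_eval (m n : ℕ) (b c x : ℝ) :
    HasDerivAt (fun y => b * (c * (derivative^[n] (rodriguesPoly m)).eval y))
      (b * (c * (derivative^[n + 1] (rodriguesPoly m)).eval x)) x := by
  rw [Function.iterate_succ_apply']
  exact (((derivative^[n] (rodriguesPoly m)).hasDerivAt x).const_mul c).const_mul b

lemma deriv_eq_eval (m l : ℕ) :
    deriv (normalizedLegendreDeriv m l) = fun x =>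
      √((m - l).factorial / (m + l).factorial) *
        (1 / (2 ^ m * m.factorial) * (derivative^[m + l + 1] (rodriguesPoly m)).eval x) := by
  rw [eq_eval]
  exact deriv_eq (hasDerivAt_eval m (m + l) _ _)

lemma isGegenbauerSolution (m l : ℕ) :
    IsGegenbauerSolution l (((m : ℝ) - l) * (m + l + 1)) (normalizedLegendreDeriv m l) where
  differentiable := by
    rw [eq_eval]
    exact fun x => (hasDerivAt_eval _ _ _ _ x).differentiableAt
  differentiable_deriv := by
    rw [deriv_eq_eval]
    exact fun x => (hasDerivAt_eval _ _ _ _ x).differentiableAt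
  ode x := by
    have h := congrArg (eval x) (rodriguesPoly.iterate_derivative_ode m (m + l))
    simp only [eval_add, eval_mul, eval_sub, eval_pow, eval_X, eval_one, eval_natCast, eval_ofNat,
      eval_zero, Nat.cast_add] at h
    rw [deriv_eq_eval, deriv_eq (hasDerivAt_eval m (m + l + 1) _ _), eq_eval]
    set b := √((m - l).factorial / (m + l).factorial : ℝ)
    linear_combination (-(b * (1 / (2 ^ m * m.factorial)))) * h

lemma apply_one_ne_zero {m l : ℕ} (hlm : l ≤ m) : normalizedLegendreDeriv m l 1 ≠ 0 := by
  have := rodriguesPoly.eval_one_iterate_derivative_ne_zero hlm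
  rw [eq_eval]
  positivity

lemma apply_zero_sq_of_even (l k : ℕ) :
    normalizedLegendreDeriv (l + 2 * k) l 0 ^ 2 =
      centralBinomRatio (l + k) * centralBinomRatio k := by
  rw [eq_eval, show l + 2 * k + l = 2 * (l + k) by ring, show l + 2 * k = l + k + k by ring,
    mul_pow, rodriguesPoly.sq_eval_zero_iterate_derivative, sq_sqrt (by positivity),
    show l + k + k - l = 2 * k by lia]
  field_simp

lemma deriv_apply_zero_of_even (l k : ℕ) : deriv (normalizedLegendreDeriv (l + 2 * k) l) 0 = 0 := by
  simp only [deriv_eq_eval]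
  rw [show l + 2 * k + l + 1 = 2 * (l + k) + 1 by ring, rodriguesPoly.eval_zero_iterate_derivative,
    rodriguesPoly.coeff_two_mul_add_one]
  simp

lemma apply_zero_of_odd (l k : ℕ) : normalizedLegendreDeriv (l + (2 * k + 1)) l 0 = 0 := by
  simp only [eq_eval]
  rw [show l + (2 * k + 1) + l = 2 * (l + k) + 1 by ring,
    rodriguesPoly.eval_zero_iterate_derivative, rodriguesPoly.coeff_two_mul_add_one]
  simp

lemma deriv_apply_zero_sq_of_odd (l k : ℕ) :
    deriv (normalizedLegendreDeriv (l + (2 * k + 1)) l) 0 ^ 2 =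
      (2 * k + 1) * (2 * (l + k + 1)) *
        (centralBinomRatio (l + k + 1) * centralBinomRatio k) := by
  simp only [deriv_eq_eval]
  rw [show l + (2 * k + 1) + l + 1 = 2 * (l + k + 1) by ring,
    show l + (2 * k + 1) + l = 2 * (l + k) + 1 by ring,
    show l + (2 * k + 1) = l + k + 1 + k by ring, mul_pow,
    rodriguesPoly.sq_eval_zero_iterate_derivative, sq_sqrt (by positivity),
    show l + k + 1 + k - l = 2 * k + 1 by lia, show 2 * (l + k + 1) = 2 * (l + k) + 1 + 1 by ring,
    Nat.factorial_succ (2 * k), Nat.factorial_succ (2 * (l + k) + 1)]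
  push_cast
  field_simp
  ring

end normalizedLegendreDeriv

/-! ### Numerical estimates -/

namespace centralBinomRatio

lemma nine_le_pi_sq_mul (j k : ℕ) :
    9 ≤ π ^ 2 * (3 * j + 1) * (3 * k + 1) * (centralBinomRatio j * centralBinomRatio k) ^ 2 := by
  linear_combination mul_le_mul (le_pi_mul_sq j) (le_pi_mul_sq k) (by norm_num) (by positivity)

lemma pi_sq_mul_le (j k : ℕ) :
    π ^ 2 * (4 * j + 1) * (4 * k + 1) * (centralBinomRatio j * centralBinomRatio k) ^ 2 ≤ 16 := by
  linear_combination mul_le_mul (pi_mul_sq_le j) (pi_mul_sq_le k) (by positivity) (by norm_num)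

lemma three_le_pi_sq_mul_sq_of_even (l : ℕ) {k : ℕ} (hk : k ≠ 0) :
    3 ≤ π ^ 2 * (2 * k * (2 * l + 2 * k + 1)) *
      (centralBinomRatio (l + k) * centralBinomRatio k) ^ 2 := by
  have h := nine_le_pi_sq_mul (l + k) k
  have hk1 : (1 : ℝ) ≤ k := by exact_mod_cast Nat.one_le_iff_ne_zero.2 hk
  push_cast at h
  have hle : (3 * (l + k) + 1 : ℝ) * (3 * k + 1) ≤ 3 * (2 * k * (2 * l + 2 * k + 1)) := by
    nlinarith [mul_nonneg (Nat.cast_nonneg (α := ℝ) l) (sub_nonneg.2 hk1)]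
  have := mul_le_mul_of_nonneg_right hle
    (show 0 ≤ π ^ 2 * (centralBinomRatio (l + k) * centralBinomRatio k) ^ 2 by positivity)
  linarith

lemma three_le_pi_sq_mul_sq_of_odd {l k : ℕ} (hl : l ≠ 0) (hk : k ≠ 0) :
    3 ≤ π ^ 2 * ((2 * k + 1) * (2 * (l + k + 1))) *
      ((2 * k + 1) * (2 * (l + k + 1)) * (centralBinomRatio (l + k + 1) * centralBinomRatio k) /
        ((2 * k + 1) * (2 * (l + k + 1)) + l + 1 / 2)) ^ 2 := by
  have h := nine_le_pi_sq_mul (l + k + 1) k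
  push_cast at h
  set X := centralBinomRatio (l + k + 1) * centralBinomRatio k
  have hle : (3 * (l + k + 1) + 1 : ℝ) * (3 * k + 1) *
      ((2 * k + 1) * (2 * (l + k + 1)) + l + 1 / 2) ^ 2 ≤
        3 * ((2 * k + 1) * (2 * (l + k + 1))) ^ 3 := by
    obtain ⟨r, rfl⟩ := Nat.exists_eq_add_one_of_ne_zero hl
    obtain ⟨s, rfl⟩ := Nat.exists_eq_add_one_of_ne_zero hk
    push_cast
    rw [← sub_nonneg]
    ring_nf
    positivity
  rw [div_pow, ← mul_div_assoc, le_div_iff₀ (by positivity)]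
  set D : ℝ := (2 * k + 1) * (2 * (l + k + 1)) + l + 1 / 2
  refine le_of_mul_le_mul_left ?_ (three_pos (α := ℝ))
  calc 3 * (3 * D ^ 2) = 9 * D ^ 2 := by ring
    _ ≤ π ^ 2 * (3 * (l + k + 1) + 1) * (3 * k + 1) * X ^ 2 * D ^ 2 := by gcongr
    _ = π ^ 2 * X ^ 2 * ((3 * (l + k + 1) + 1) * (3 * k + 1) * D ^ 2) := by ring
    _ ≤ π ^ 2 * X ^ 2 * (3 * ((2 * k + 1) * (2 * (l + k + 1))) ^ 3) := by gcongr
    _ = _ := by ring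

lemma pi_pow_three_mul_sq_lt_of_even (l k : ℕ) :
    π ^ 3 * (2 * k * (2 * l + 2 * k + 1) + l) *
      (centralBinomRatio (l + k) * centralBinomRatio k) ^ 2 < 32 := by
  have h := pi_sq_mul_le (l + k) k
  push_cast at h
  set X := centralBinomRatio (l + k) * centralBinomRatio k
  have hX : 0 < X := mul_pos (pos _) (pos _)
  calc π ^ 3 * (2 * k * (2 * l + 2 * k + 1) + l) * X ^ 2
      = π / 4 * (π ^ 2 * X ^ 2 * ((4 * (l + k) + 1) * (4 * k + 1) - 1)) := by ring
    _ ≤ π / 4 * 16 := by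
      gcongr
      linarith [show 0 < π ^ 2 * X ^ 2 by positivity]
    _ < 32 := by linarith [pi_lt_four]

lemma pi_pow_three_mul_sq_lt_of_odd {l : ℕ} (hl : l ≠ 0) (k : ℕ) :
    π ^ 3 * ((2 * k + 1) * (2 * (l + k + 1)) *
      (centralBinomRatio (l + k + 1) * centralBinomRatio k)) ^ 2 /
        ((2 * k + 1) * (2 * (l + k + 1)) + l) < 32 := by
  have h := pi_sq_mul_le (l + k + 1) k
  push_cast at h
  set X := centralBinomRatio (l + k + 1) * centralBinomRatio k
  have hX : 0 < X := mul_pos (pos _) (pos _)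
  have hlt : 3.2 * ((2 * k + 1) * (2 * (l + k + 1)) : ℝ) ^ 2 <
      2 * ((2 * k + 1) * (2 * (l + k + 1)) + l) * ((4 * (l + k + 1) + 1) * (4 * k + 1)) := by
    obtain ⟨r, rfl⟩ := Nat.exists_eq_add_one_of_ne_zero hl
    push_cast
    rw [← sub_pos]
    ring_nf
    positivity
  rw [div_lt_iff₀ (by positivity)]
  calc π ^ 3 * ((2 * k + 1) * (2 * (l + k + 1)) * X) ^ 2
      = π ^ 2 * X ^ 2 * (π * ((2 * k + 1) * (2 * (l + k + 1))) ^ 2) := by ring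
    _ ≤ π ^ 2 * X ^ 2 * (3.2 * ((2 * k + 1) * (2 * (l + k + 1))) ^ 2) := by
      gcongr
      linarith [pi_lt_d2]
    _ < π ^ 2 * X ^ 2 * (2 * ((2 * k + 1) * (2 * (l + k + 1)) + l) *
        ((4 * (l + k + 1) + 1) * (4 * k + 1))) := by gcongr
    _ = 2 * ((2 * k + 1) * (2 * (l + k + 1)) + l) *
        (π ^ 2 * (4 * (l + k + 1) + 1) * (4 * k + 1) * X ^ 2) := by ring
    _ ≤ 2 * ((2 * k + 1) * (2 * (l + k + 1)) + l) * 16 := by gcongr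
    _ = _ := by ring

lemma lt_mul_of_sq_lt {a b : ℝ} (hb : 0 ≤ b) (k : ℕ) (h : 3.15 * (3 * k + 1) * a ^ 2 < 3 * b ^ 2) :
    a < b * centralBinomRatio k := by
  have hc := pos k
  refine lt_of_pow_lt_pow_left₀ 2 (by positivity) ?_
  refine lt_of_mul_lt_mul_left ?_ (show (0 : ℝ) ≤ 3.15 * (3 * k + 1) by positivity)
  calc 3.15 * (3 * k + 1) * a ^ 2
      < 3 * b ^ 2 := h
    _ ≤ π * (3 * k + 1) * centralBinomRatio k ^ 2 * b ^ 2 := by gcongr; exact le_pi_mul_sq k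
    _ ≤ 3.15 * (3 * k + 1) * centralBinomRatio k ^ 2 * b ^ 2 := by gcongr; exact pi_lt_d2.le
    _ = 3.15 * (3 * k + 1) * (b * centralBinomRatio k) ^ 2 := by ring

lemma nine_eighths_lt {l : ℕ} (hl : l ≠ 0) : 9 / 8 < 2.22 * (l + 1) * centralBinomRatio l := by
  obtain ⟨r, rfl⟩ := Nat.exists_eq_add_one_of_ne_zero hl
  refine lt_mul_of_sq_lt (by positivity) _ ?_
  push_cast
  rw [← sub_pos]
  ring_nf
  positivity

lemma nine_eighths_lt_succ {l : ℕ} (hl : l ≠ 0) :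
    9 / 8 < 2.22 * (l + 1) * (2 * (l + 1) * centralBinomRatio (l + 1) /
      (2 * (l + 1) + l + 1 / 2)) := by
  rw [← mul_div_assoc, lt_div_iff₀ (by positivity), ← mul_assoc]
  obtain ⟨r, rfl⟩ := Nat.exists_eq_add_one_of_ne_zero hl
  refine lt_mul_of_sq_lt (by positivity) _ ?_
  push_cast
  rw [← sub_pos]
  ring_nf
  positivity

end centralBinomRatio

section Numerics

lemma pi_sq_lt_d2 : π ^ 2 < 9.87 := by
  nlinarith [pi_lt_d4, pi_pos]

lemma mul_sq_le_of_mul_one_add_div_le {l t : ℝ} (hl : 1 ≤ l) (h : t * (1 + t / (2 * (l + 2))) ≤ l) :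
    t * (8 * l + 1) ^ 2 ≤ 0.74 * (l + 1) * (8 * l) ^ 2 := by
  -- `t = 0.74 l` is just above the root `(√3 - 1) l` of `t (1 + t / (2 l)) = l`.
  have htangent : t * (1.74 * l + 2) ≤ l * (1.2738 * l + 2) := by
    rw [mul_add, mul_one, ← mul_div_assoc, ← sq, ← le_sub_iff_add_le',
      div_le_iff₀ (by positivity)] at h
    nlinarith [sq_nonneg (t - 0.74 * l)]
  refine le_of_mul_le_mul_right ?_ (show 0 < 1.74 * l + 2 by positivity)
  calc t * (8 * l + 1) ^ 2 * (1.74 * l + 2)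
      = t * (1.74 * l + 2) * (8 * l + 1) ^ 2 := by ring
    _ ≤ l * (1.2738 * l + 2) * (8 * l + 1) ^ 2 := by gcongr
    _ ≤ 0.74 * (l + 1) * (8 * l) ^ 2 * (1.74 * l + 2) := by
      obtain ⟨s, rfl⟩ := exists_add_of_le hl
      have hs : 0 ≤ s := by linarith
      rw [← sub_nonneg]
      ring_nf
      positivity

lemma mul_one_sub_sq_le_of_barrierRate_le {l : ℕ} {A x : ℝ} (hl : l ≠ 0)
    (h : barrierRate l A x ≤ l) :
    A * (1 - x ^ 2) * (1 + 1 / (8 * l)) ^ 2 ≤ 1.48 * (l + 1) ^ 2 := by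
  have hl1 : (1 : ℝ) ≤ l := by exact_mod_cast Nat.one_le_iff_ne_zero.2 hl
  have := mul_sq_le_of_mul_one_add_div_le hl1 h
  rw [div_mul_eq_mul_div, div_le_iff₀ (by positivity)] at this
  rw [one_add_div (by positivity), div_pow, ← mul_div_assoc, div_le_iff₀ (by positivity)]
  linarith

lemma one_lt_of_three_le {l A E V v : ℝ} (hl : 0 < l) (hA : 0 ≤ A) (hE : 0 ≤ E) (hv : 0 ≤ v)
    (hV : 0 ≤ V) (hAE : 3 ≤ π ^ 2 * A * E ^ 2) (hle : E ≤ √v * V * (1 + 1 / (8 * l)))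
    (hrate : A * v * (1 + 1 / (8 * l)) ^ 2 ≤ 1.48 * (l + 1) ^ 2) :
    1 < 2.22 * (l + 1) * V := by
  have hsq : 3 ≤ 14.6076 * ((l + 1) * V) ^ 2 :=
    calc 3 ≤ π ^ 2 * A * E ^ 2 := hAE
      _ ≤ π ^ 2 * A * (√v * V * (1 + 1 / (8 * l))) ^ 2 := by gcongr
      _ = π ^ 2 * (A * v * (1 + 1 / (8 * l)) ^ 2) * V ^ 2 := by
        rw [mul_pow, mul_pow, sq_sqrt hv]
        ring
      -- `9.87 * 1.48 = 14.6076 < 3 * 2.22²`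
      _ ≤ 9.87 * (1.48 * (l + 1) ^ 2) * V ^ 2 := by
        gcongr
        exact pi_sq_lt_d2.le
      _ = _ := by ring
  refine lt_of_pow_lt_pow_left₀ 2 (by positivity) ?_
  linarith

lemma one_lt_of_nine_eighths_lt {l E V v : ℝ} (hl : 1 ≤ l) (hv : v ≤ 1) (hV : 0 ≤ V)
    (hE : 9 / 8 < 2.22 * (l + 1) * E) (hle : E ≤ √v * V * (1 + 1 / (8 * l))) :
    1 < 2.22 * (l + 1) * V := by
  have hEV : E ≤ V * (9 / 8) :=
    calc E ≤ √v * V * (1 + 1 / (8 * l)) := hle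
      _ ≤ 1 * V * (1 + 1 / (8 * 1)) := by
        gcongr
        exact sqrt_le_one.2 hv
      _ = V * (9 / 8) := by ring
  have := mul_le_mul_of_nonneg_left hEV (show 0 ≤ 2.22 * (l + 1) by positivity)
  linarith

lemma sqrt_div_sqrt_lt {l B : ℝ} (hl : 0 < l) (hB₀ : 0 ≤ B) (hB : π ^ 3 * B ^ 2 < 32) :
    √(B / √l) < 2 ^ ((5 : ℝ) / 4) * π ^ (-(3 : ℝ) / 4) * l ^ (-(1 : ℝ) / 4) := by
  have hpow : ∀ a b : ℝ, 0 ≤ a → (a ^ (b / 4)) ^ 4 = a ^ b := fun a b ha => by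
    rw [← rpow_mul_natCast ha, Nat.cast_ofNat, div_mul_cancel₀ _ four_ne_zero]
  refine lt_of_pow_lt_pow_left₀ 4 (by positivity) ?_
  calc √(B / √l) ^ 4 = B ^ 2 / l := by
        rw [show 4 = 2 * 2 from rfl, pow_mul, sq_sqrt (by positivity), div_pow, sq_sqrt hl.le]
    _ < 32 / π ^ 3 / l := by
      gcongr
      rwa [lt_div_iff₀' (by positivity)]
    _ = 2 ^ (5 : ℝ) * π ^ (-3 : ℝ) * l ^ (-1 : ℝ) := by
      rw [rpow_neg pi_pos.le, rpow_neg_one]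
      norm_num
      rfl
    _ = (2 ^ ((5 : ℝ) / 4) * π ^ (-(3 : ℝ) / 4) * l ^ (-(1 : ℝ) / 4)) ^ 4 := by
      rw [mul_pow, mul_pow, hpow 2 5 zero_le_two, hpow π (-3) pi_pos.le, hpow l (-1) hl.le]

end Numerics

namespace normalizedLegendreDeriv

variable {l m : ℕ}

lemma three_le_pi_sq_mul_sq (hl : l ≠ 0) (hlm : l + 2 ≤ m) :
    3 ≤ π ^ 2 * (((m : ℝ) - l) * (m + l + 1)) * (normalizedLegendreDeriv m l 0 ^ 2 +
      deriv (normalizedLegendreDeriv m l) 0 ^ 2 /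
        (((m : ℝ) - l) * (m + l + 1) + l + 1 / 2)) ^ 2 := by
  obtain ⟨d, rfl⟩ := Nat.exists_eq_add_of_le (Nat.le_of_add_right_le hlm)
  rcases Nat.even_or_odd' d with ⟨k, rfl | rfl⟩
  · have h := centralBinomRatio.three_le_pi_sq_mul_sq_of_even l (k := k) (by lia)
    rw [apply_zero_sq_of_even, deriv_apply_zero_of_even, zero_pow two_ne_zero, zero_div, add_zero]
    convert h using 3
    push_cast
    ring
  · have h := centralBinomRatio.three_le_pi_sq_mul_sq_of_odd hl (k := k) (by lia)
    rw [deriv_apply_zero_sq_of_odd, apply_zero_of_odd, zero_pow two_ne_zero, zero_add]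
    convert h using 5 <;> · push_cast; ring

lemma nine_eighths_lt (hl : l ≠ 0) (hlm : l ≤ m) (hml : m ≤ l + 1) :
    9 / 8 < 2.22 * (l + 1) * (normalizedLegendreDeriv m l 0 ^ 2 +
      deriv (normalizedLegendreDeriv m l) 0 ^ 2 /
        (((m : ℝ) - l) * (m + l + 1) + l + 1 / 2)) := by
  obtain rfl | rfl : m = l ∨ m = l + 1 := by lia
  · have hval := apply_zero_sq_of_even m 0
    have hderiv := deriv_apply_zero_of_even m 0
    rw [mul_zero, add_zero] at hval hderiv
    rw [hval, hderiv]
    simpa using centralBinomRatio.nine_eighths_lt hl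
  · have hval := apply_zero_of_odd l 0
    have hderiv := deriv_apply_zero_sq_of_odd l 0
    rw [mul_zero, zero_add] at hval hderiv
    rw [hval, hderiv]
    convert centralBinomRatio.nine_eighths_lt_succ hl using 2
    simp
    ring

lemma pi_pow_three_mul_sq_lt (hl : l ≠ 0) (hlm : l ≤ m) :
    π ^ 3 * (√(((m : ℝ) - l) * (m + l + 1) + l) * normalizedLegendreDeriv m l 0 ^ 2 +
      deriv (normalizedLegendreDeriv m l) 0 ^ 2 /
        √(((m : ℝ) - l) * (m + l + 1) + l)) ^ 2 < 32 := by
  obtain ⟨d, rfl⟩ := Nat.exists_eq_add_of_le hlm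
  rcases Nat.even_or_odd' d with ⟨k, rfl | rfl⟩
  · have h := centralBinomRatio.pi_pow_three_mul_sq_lt_of_even l k
    rw [apply_zero_sq_of_even, deriv_apply_zero_of_even, zero_pow two_ne_zero, zero_div, add_zero,
      mul_pow, sq_sqrt (by push_cast; ring_nf; positivity)]
    push_cast
    convert h using 1
    ring
  · have h := centralBinomRatio.pi_pow_three_mul_sq_lt_of_odd hl k
    rw [deriv_apply_zero_sq_of_odd, apply_zero_of_odd, zero_pow two_ne_zero, mul_zero, zero_add,
      div_pow, sq_sqrt (by push_cast; ring_nf; positivity)]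
    push_cast
    convert h using 1
    ring

lemma exists_lt_sq_assocFun (hl : l ≠ 0) (hlm : l ≤ m) :
    ∃ x ∈ Set.Icc (-1 : ℝ) 1,
      1 / (2.22 * ((l : ℝ) + 1)) < assocFun l (normalizedLegendreDeriv m l) x ^ 2 := by
  have hl1 : (1 : ℝ) ≤ l := by exact_mod_cast Nat.one_le_iff_ne_zero.2 hl
  have hA : 0 ≤ ((m : ℝ) - l) * (m + l + 1) := mul_nonneg (by simpa using hlm) (by positivity)
  obtain ⟨x, hx, hrate, hle⟩ :=
    (isGegenbauerSolution m l).exists_energy_le hl hA (apply_one_ne_zero hlm)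
  have hv : 0 ≤ 1 - x ^ 2 := by nlinarith [hx.1, hx.2]
  refine ⟨x, ⟨by linarith [hx.1], hx.2.le⟩, ?_⟩
  rw [div_lt_iff₀' (by positivity)]
  rcases le_or_gt (l + 2) m with hd | hd
  · exact one_lt_of_three_le (by positivity) hA (by positivity) hv (sq_nonneg _)
      (three_le_pi_sq_mul_sq hl hd) hle (mul_one_sub_sq_le_of_barrierRate_le hl hrate)
  · exact one_lt_of_nine_eighths_lt hl1 (by linarith [sq_nonneg x]) (sq_nonneg _)
      (nine_eighths_lt hl hlm (by lia)) hle

lemma exists_abs_assocFun_le (hl : l ≠ 0) (hlm : l ≤ m) :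
    ∃ C < 2 ^ ((5 : ℝ) / 4) * π ^ (-(3 : ℝ) / 4) * (l : ℝ) ^ (-(1 : ℝ) / 4),
      ∀ x ∈ Set.Icc (-1 : ℝ) 1, |assocFun l (normalizedLegendreDeriv m l) x| ≤ C := by
  have hl0 : (0 : ℝ) < l := by positivity
  have hA : 0 ≤ ((m : ℝ) - l) * (m + l + 1) := mul_nonneg (by simpa using hlm) (by positivity)
  refine ⟨_, sqrt_div_sqrt_lt hl0 (by positivity) (pi_pow_three_mul_sq_lt hl hlm), fun x hx => ?_⟩
  refine abs_le_sqrt ?_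
  rw [le_div_iff₀' (by positivity)]
  exact (isGegenbauerSolution m l).sqrt_mul_sq_le hl hA hx

end normalizedLegendreDeriv

/-- **Lohöfer's bounds.** For integers `1 ≤ l ≤ m`,
`1/√(2.22(l+1)) < max_{x∈[−1,1]} |√((m−l)!/(m+l)!) P_m^l(x)| < 2^{5/4} π^{−3/4} l^{−1/4}`. -/
theorem lohoefer_bounds (m l : ℕ) (hl : 1 ≤ l) (hlm : l ≤ m) :
    1 / Real.sqrt (2.22 * ((l : ℝ) + 1)) <
      (⨆ x : Set.Icc (-1 : ℝ) 1,
        |Real.sqrt (((m - l).factorial : ℝ) / ((m + l).factorial : ℝ)) *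
          assocLegendreP m l (x : ℝ)|) ∧
    (⨆ x : Set.Icc (-1 : ℝ) 1,
        |Real.sqrt (((m - l).factorial : ℝ) / ((m + l).factorial : ℝ)) *
          assocLegendreP m l (x : ℝ)|) <
      2 ^ ((5 : ℝ) / 4) * π ^ (-(3 : ℝ) / 4) * (l : ℝ) ^ (-(1 : ℝ) / 4) := by
  have hl0 : l ≠ 0 := Nat.one_le_iff_ne_zero.1 hl
  simp only [← normalizedLegendreDeriv.assocFun_eq]
  obtain ⟨C, hC, hle⟩ := normalizedLegendreDeriv.exists_abs_assocFun_le hl0 hlm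
  obtain ⟨x, hx, hlt⟩ := normalizedLegendreDeriv.exists_lt_sq_assocFun hl0 hlm
  constructor
  · calc 1 / √(2.22 * ((l : ℝ) + 1)) = √(1 / (2.22 * ((l : ℝ) + 1))) := by
          rw [sqrt_div zero_le_one, sqrt_one]
      _ < |assocFun l (normalizedLegendreDeriv m l) x| := by
        rw [← sqrt_sq_eq_abs]
        exact sqrt_lt_sqrt (by positivity) hlt
      _ ≤ _ := le_ciSup (f := fun y : Set.Icc (-1 : ℝ) 1 =>
          |assocFun l (normalizedLegendreDeriv m l) y|)
          ⟨C, Set.forall_mem_range.2 fun y => hle y y.2⟩ ⟨x, hx⟩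
  · have : Nonempty (Set.Icc (-1 : ℝ) 1) := ⟨⟨x, hx⟩⟩
    exact (ciSup_le fun y : Set.Icc (-1 : ℝ) 1 => hle y y.2).trans_lt hC
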